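/- For every truth assignment J to the variables of encf(F*) that obeys transitivity, there is an interpretation I* of the variables in F* such that I*[F*] = J[encf(F*)]. -/

import Mathlib

mutual
inductive EufTerm (Fn Pr : Type) : Type
  | app : Fn → List (EufTerm Fn Pr) → EufTerm Fn Pr
  | ite : EufFormula Fn Pr → EufTerm Fn Pr → EufTerm Fn Pr → EufTerm Fn Pr
inductive EufFormula (Fn Pr : Type) : Type
  | tt : EufFormula Fn Pr
  | ff : EufFormula Fn Pr
  | not : EufFormula Fn Pr → EufFormula Fn Pr
  | and : EufFormula Fn Pr → EufFormula Fn Pr → EufFormula Fn Pr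
  | or : EufFormula Fn Pr → EufFormula Fn Pr → EufFormula Fn Pr
  | eq : EufTerm Fn Pr → EufTerm Fn Pr → EufFormula Fn Pr
  | papp : Pr → List (EufTerm Fn Pr) → EufFormula Fn Pr
end

structure Interp (Fn Pr : Type) (D : Type u) where
  fn : Fn → List D → D
  pr : Pr → List D → Bool

open Classical in
mutual
noncomputable def evalT {Fn Pr : Type} {D : Type} (I : Interp Fn Pr D) : EufTerm Fn Pr → D
  | .app f args => I.fn f (args.attach.map (fun t => evalT I t.1))
  | .ite G T1 T2 => if evalF I G then evalT I T1 else evalT I T2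
termination_by t => sizeOf t
decreasing_by
  all_goals simp_wf
  all_goals try omega
  all_goals (have := List.sizeOf_lt_of_mem t.2; omega)
noncomputable def evalF {Fn Pr : Type} {D : Type} (I : Interp Fn Pr D) : EufFormula Fn Pr → Bool
  | .tt => true
  | .ff => false
  | .not G => !evalF I G
  | .and G1 G2 => evalF I G1 && evalF I G2
  | .or G1 G2 => evalF I G1 || evalF I G2
  | .eq T1 T2 => decide (evalT I T1 = evalT I T2)
  | .papp p args => I.pr p (args.attach.map (fun t => evalT I t.1))
termination_by g => sizeOf g
decreasing_by
  all_goals simp_wf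
  all_goals try omega
  all_goals (have := List.sizeOf_lt_of_mem t.2; omega)
end
def ValidOn {Fn Pr : Type} (F : EufFormula Fn Pr) (D : Type) : Prop :=
  ∀ I : Interp Fn Pr D, evalF I F = true

def UniversallyValid {Fn Pr : Type} (F : EufFormula Fn Pr) : Prop :=
  ∀ D : Type, Nonempty D → ValidOn F D

/-- Expressions: terms or formulas. -/
inductive EufExpr (Fn Pr : Type) : Type
  | t : EufTerm Fn Pr → EufExpr Fn Pr
  | f : EufFormula Fn Pr → EufExpr Fn Pr

/-- Immediate (proper) subexpression relation. -/
inductive ImmSub {Fn Pr : Type} : EufExpr Fn Pr → EufExpr Fn Pr → Prop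
  | appArg {g : Fn} {args : List (EufTerm Fn Pr)} {T : EufTerm Fn Pr} :
      T ∈ args → ImmSub (.t T) (.t (.app g args))
  | iteC {G : EufFormula Fn Pr} {T1 T2 : EufTerm Fn Pr} : ImmSub (.f G) (.t (.ite G T1 T2))
  | ite1 {G : EufFormula Fn Pr} {T1 T2 : EufTerm Fn Pr} : ImmSub (.t T1) (.t (.ite G T1 T2))
  | ite2 {G : EufFormula Fn Pr} {T1 T2 : EufTerm Fn Pr} : ImmSub (.t T2) (.t (.ite G T1 T2))
  | not {G : EufFormula Fn Pr} : ImmSub (.f G) (.f (.not G))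
  | andL {G1 G2 : EufFormula Fn Pr} : ImmSub (.f G1) (.f (.and G1 G2))
  | andR {G1 G2 : EufFormula Fn Pr} : ImmSub (.f G2) (.f (.and G1 G2))
  | orL {G1 G2 : EufFormula Fn Pr} : ImmSub (.f G1) (.f (.or G1 G2))
  | orR {G1 G2 : EufFormula Fn Pr} : ImmSub (.f G2) (.f (.or G1 G2))
  | eqL {T1 T2 : EufTerm Fn Pr} : ImmSub (.t T1) (.f (.eq T1 T2))
  | eqR {T1 T2 : EufTerm Fn Pr} : ImmSub (.t T2) (.f (.eq T1 T2))
  | pappArg {p : Pr} {args : List (EufTerm Fn Pr)} {T : EufTerm Fn Pr} :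
      T ∈ args → ImmSub (.t T) (.f (.papp p args))

/-- `SubExpr a b`: `a` occurs (as a subexpression) in `b`. -/
def SubExpr {Fn Pr : Type} (a b : EufExpr Fn Pr) : Prop := Relation.ReflTransGen ImmSub a b

def TermInT {Fn Pr : Type} (T S : EufTerm Fn Pr) : Prop := SubExpr (.t T) (.t S)
def TermInF {Fn Pr : Type} (T : EufTerm Fn Pr) (F : EufFormula Fn Pr) : Prop :=
  SubExpr (.t T) (.f F)
def FormulaInT {Fn Pr : Type} (G : EufFormula Fn Pr) (S : EufTerm Fn Pr) : Prop :=
  SubExpr (.f G) (.t S)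
def FormulaInF {Fn Pr : Type} (G F : EufFormula Fn Pr) : Prop := SubExpr (.f G) (.f F)

def IsAppTerm {Fn Pr : Type} : EufTerm Fn Pr → Prop
  | .app _ _ => True
  | _ => False

/-- `𝒯(F)`: the function application terms occurring in `F`. -/
def AppTermsF {Fn Pr : Type} (F : EufFormula Fn Pr) : Set (EufTerm Fn Pr) :=
  {T | IsAppTerm T ∧ TermInF T F}

/-- A function symbol occurs in `F` when some application of it occurs in `F`. -/
def FnInF {Fn Pr : Type} (g : Fn) (F : EufFormula Fn Pr) : Prop :=
  ∃ args, TermInF (EufTerm.app g args) F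

def PrInF {Fn Pr : Type} (p : Pr) (F : EufFormula Fn Pr) : Prop :=
  ∃ args, FormulaInF (EufFormula.papp p args) F

/-- `I` is diverse for `F` with respect to the set `Sg` of function symbols. -/
def DiverseFor {Fn Pr D : Type} (I : Interp Fn Pr D) (F : EufFormula Fn Pr)
    (Sg : Set Fn) : Prop :=
  ∀ (g : Fn) (args : List (EufTerm Fn Pr)), g ∈ Sg →
    TermInF (EufTerm.app g args) F →
    ∀ T2 ∈ AppTermsF F, evalT I (EufTerm.app g args) = evalT I T2 →
      ∃ args2, T2 = EufTerm.app g args2 ∧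
        List.Forall₂ (fun a b => evalT I a = evalT I b) args args2

mutual
/-- PEUF g-terms, where `isP` designates the p-function symbols. -/
inductive IsGTerm {Fn Pr : Type} (isP : Fn → Prop) : EufTerm Fn Pr → Prop
  | ite {G : EufFormula Fn Pr} {T1 T2 : EufTerm Fn Pr} :
      IsGFormula isP G → IsGTerm isP T1 → IsGTerm isP T2 → IsGTerm isP (.ite G T1 T2)
  | app {g : Fn} {args : List (EufTerm Fn Pr)} :
      ¬ isP g → (∀ T ∈ args, IsPTerm isP T) → IsGTerm isP (.app g args)
/-- PEUF p-terms. -/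
inductive IsPTerm {Fn Pr : Type} (isP : Fn → Prop) : EufTerm Fn Pr → Prop
  | g {T : EufTerm Fn Pr} : IsGTerm isP T → IsPTerm isP T
  | ite {G : EufFormula Fn Pr} {T1 T2 : EufTerm Fn Pr} :
      IsGFormula isP G → IsPTerm isP T1 → IsPTerm isP T2 → IsPTerm isP (.ite G T1 T2)
  | app {g : Fn} {args : List (EufTerm Fn Pr)} :
      isP g → (∀ T ∈ args, IsPTerm isP T) → IsPTerm isP (.app g args)
/-- PEUF g-formulas. -/
inductive IsGFormula {Fn Pr : Type} (isP : Fn → Prop) : EufFormula Fn Pr → Prop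
  | tt : IsGFormula isP .tt
  | ff : IsGFormula isP .ff
  | not {G : EufFormula Fn Pr} : IsGFormula isP G → IsGFormula isP (.not G)
  | and {G1 G2 : EufFormula Fn Pr} :
      IsGFormula isP G1 → IsGFormula isP G2 → IsGFormula isP (.and G1 G2)
  | or {G1 G2 : EufFormula Fn Pr} :
      IsGFormula isP G1 → IsGFormula isP G2 → IsGFormula isP (.or G1 G2)
  | eq {T1 T2 : EufTerm Fn Pr} :
      IsGTerm isP T1 → IsGTerm isP T2 → IsGFormula isP (.eq T1 T2)
  | papp {p : Pr} {args : List (EufTerm Fn Pr)} :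
      (∀ T ∈ args, IsPTerm isP T) → IsGFormula isP (.papp p args)
/-- PEUF p-formulas. -/
inductive IsPFormula {Fn Pr : Type} (isP : Fn → Prop) : EufFormula Fn Pr → Prop
  | g {G : EufFormula Fn Pr} : IsGFormula isP G → IsPFormula isP G
  | and {G1 G2 : EufFormula Fn Pr} :
      IsPFormula isP G1 → IsPFormula isP G2 → IsPFormula isP (.and G1 G2)
  | or {G1 G2 : EufFormula Fn Pr} :
      IsPFormula isP G1 → IsPFormula isP G2 → IsPFormula isP (.or G1 G2)
  | eq {T1 T2 : EufTerm Fn Pr} :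
      IsPTerm isP T1 → IsPTerm isP T2 → IsPFormula isP (.eq T1 T2)
end

/-- The p-function symbols occurring in `F`. -/
def PSymbolsIn {Fn Pr : Type} (isP : Fn → Prop) (F : EufFormula Fn Pr) : Set Fn :=
  {g | isP g ∧ FnInF g F}

/-- `I` is maximally diverse for the p-formula `F`. -/
def MaxDiverse {Fn Pr D : Type} (isP : Fn → Prop) (I : Interp Fn Pr D)
    (F : EufFormula Fn Pr) : Prop :=
  DiverseFor I F (PSymbolsIn isP F)

/-- `I'` refines `I` on the term set `Ts`. -/
def RefinesOn {Fn Pr D D' : Type} (I' : Interp Fn Pr D') (I : Interp Fn Pr D)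
    (Ts : Set (EufTerm Fn Pr)) : Prop :=
  ∀ T1 ∈ Ts, ∀ T2 ∈ Ts, evalT I' T1 = evalT I' T2 → evalT I T1 = evalT I T2

def ProperRefinesOn {Fn Pr D D' : Type} (I' : Interp Fn Pr D') (I : Interp Fn Pr D)
    (Ts : Set (EufTerm Fn Pr)) : Prop :=
  RefinesOn I' I Ts ∧
    ∃ T1 ∈ Ts, ∃ T2 ∈ Ts, evalT I T1 = evalT I T2 ∧ evalT I' T1 ≠ evalT I' T2
/-- Propositional formulas over a variable type `V`. -/
inductive PropForm (V : Type) : Type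
  | tt : PropForm V
  | ff : PropForm V
  | var : V → PropForm V
  | not : PropForm V → PropForm V
  | and : PropForm V → PropForm V → PropForm V
  | or : PropForm V → PropForm V → PropForm V

/-- Evaluation of a propositional formula under a truth assignment. -/
def PropForm.evalP {V : Type} (J : V → Bool) : PropForm V → Bool
  | .tt => true
  | .ff => false
  | .var v => J v
  | .not φ => !φ.evalP J
  | .and φ ψ => φ.evalP J && ψ.evalP J
  | .or φ ψ => φ.evalP J || ψ.evalP J

/-- Variables of the propositional encoding: the propositional variables of `F*`
together with the equality variables `e_{i,j}`. -/
abbrev EncVar (Pr : Type) : Type := Pr ⊕ ℕ × ℕ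

/-- `e_{[i,j]}`. -/
def evarF {Pr : Type} (i j : ℕ) : PropForm (EncVar Pr) :=
  if i = j then .tt else if i < j then .var (.inr (i, j)) else .var (.inr (j, i))

def bigOr {V : Type} (l : List (PropForm V)) : PropForm V := l.foldr .or .ff

open Classical in
mutual
/-- `enct_i(T)`: the conditions under which term `T` selects the domain variable `v i`. -/
noncomputable def enct {Fn Pr : Type} (v : ℕ → Fn) (N M : ℕ) (i : ℕ) :
    EufTerm Fn Pr → PropForm (EncVar Pr)
  | .app g _ => if g = v i then .tt else .ff
  | .ite G T1 T2 =>
      .or (.and (encf v N M G) (enct v N M i T1))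
          (.and (.not (encf v N M G)) (enct v N M i T2))
/-- `encf(G)`: the propositional encoding of the formula `G`. -/
noncomputable def encf {Fn Pr : Type} (v : ℕ → Fn) (N M : ℕ) :
    EufFormula Fn Pr → PropForm (EncVar Pr)
  | .tt => .tt
  | .ff => .ff
  | .not G => .not (encf v N M G)
  | .and G1 G2 => .and (encf v N M G1) (encf v N M G2)
  | .or G1 G2 => .or (encf v N M G1) (encf v N M G2)
  | .papp p _ => .var (.inl p)
  | .eq T1 T2 =>
      .or
        (bigOr ((List.range' 1 N).flatMap (fun i =>
          (List.range' 1 N).map (fun j =>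
            PropForm.and (enct v N M i T1) (.and (evarF i j) (enct v N M j T2))))))
        (bigOr ((List.range' (N+1) M).map (fun i =>
          PropForm.and (enct v N M i T1) (enct v N M i T2))))
end

/-- A truth assignment obeys transitivity on the equality variables `e_{i,j}`, `1 ≤ i,j ≤ N`. -/
def ObeysTrans {Pr : Type} (J : EncVar Pr → Bool) (N : ℕ) : Prop :=
  ∀ i j k, 1 ≤ i → i ≤ N → 1 ≤ j → j ≤ N → 1 ≤ k → k ≤ N →
    (evarF (Pr := Pr) i j).evalP J = true → (evarF (Pr := Pr) j k).evalP J = true →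
    (evarF (Pr := Pr) i k).evalP J = true

open Classical in
/-- `sel_{I}(T)`: the index of the domain variable selected by the ITE controls of `T`. -/
noncomputable def selT {Fn Pr D : Type} (v : ℕ → Fn) (NM : ℕ) (I : Interp Fn Pr D) :
    EufTerm Fn Pr → ℕ
  | .app g _ => sInf {i | 1 ≤ i ∧ i ≤ NM ∧ g = v i}
  | .ite G T1 T2 => if evalF I G = true then selT v NM I T1 else selT v NM I T2

/-- `F` contains only domain variables (among `v 1, …, v NM`) and propositional variables. -/
def VarsOnlyEnum {Fn Pr : Type} (v : ℕ → Fn) (NM : ℕ) (F : EufFormula Fn Pr) : Prop :=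
  (∀ (g : Fn) (args : List (EufTerm Fn Pr)), TermInF (EufTerm.app g args) F →
      args = [] ∧ ∃ i, 1 ≤ i ∧ i ≤ NM ∧ g = v i) ∧
  (∀ (p : Pr) (args : List (EufTerm Fn Pr)), FormulaInF (EufFormula.papp p args) F →
      args = [])

/-!
Transitivity makes the variables `e_{i,j}` that `J` sets to true an equivalence relation on
`{1, …, N}`; extended by equality to all indices, its classes are the domain of `I*`, in which `v_i`
denotes the class of `i`. Under `I*` the value of a term is thus the class of the index that its ITE
controls select. By injectivity of `v`, that index is the only one whose `enct_i` holds under `J`,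
so that the disjunction encoding `T1 = T2` collapses to a single disjunct: whether the indices
selected by `T1` and `T2` are equivalent.
-/

namespace PropForm

theorem evalP_bigOr {V : Type} (J : V → Bool) (l : List (PropForm V)) :
    (bigOr l).evalP J = true ↔ ∃ φ ∈ l, φ.evalP J = true := by
  induction l with
  | nil => simp [bigOr, evalP]
  | cons φ l ih =>
    change (evalP J φ || (bigOr l).evalP J) = true ↔ _
    simp only [Bool.or_eq_true, ih, List.exists_mem_cons_iff]

end PropForm

theorem evalF_eq_iff {Fn Pr D : Type} (I : Interp Fn Pr D) (T₁ T₂ : EufTerm Fn Pr) :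
    evalF I (.eq T₁ T₂) = true ↔ evalT I T₁ = evalT I T₂ := by
  classical
  rw [evalF, decide_eq_true_iff]

theorem evarF_self {Pr : Type} (i : ℕ) : evarF (Pr := Pr) i i = .tt := if_pos rfl

theorem evarF_comm {Pr : Type} (i j : ℕ) : evarF (Pr := Pr) i j = evarF j i := by
  unfold evarF
  split_ifs <;> first | rfl | omega

/-- The index relation read off from `J`: `e_{[i,j]}` holds and `1 ≤ i, j ≤ N`. Equality is adjoined
to make it reflexive on all of `ℕ`, so that each index above `N` is related to itself only. -/
def EVarRel {Pr : Type} (J : EncVar Pr → Bool) (N i j : ℕ) : Prop :=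
  i = j ∨ i ∈ Set.Icc 1 N ∧ j ∈ Set.Icc 1 N ∧ (evarF i j).evalP J = true

theorem evarRel_equivalence {Pr : Type} {J : EncVar Pr → Bool} {N : ℕ} (hJ : ObeysTrans J N) :
    Equivalence (EVarRel J N) where
  refl _ := .inl rfl
  symm := by
    rintro i j (rfl | ⟨hi, hj, hij⟩)
    · exact .inl rfl
    · exact .inr ⟨hj, hi, evarF_comm i j ▸ hij⟩
  trans := by
    rintro i j k (rfl | ⟨hi, hj, hij⟩) (rfl | ⟨hj', hk, hjk⟩)
    · exact .inl rfl
    · exact .inr ⟨hj', hk, hjk⟩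
    · exact .inr ⟨hi, hj, hij⟩
    · exact .inr ⟨hi, hk, hJ i j k hi.1 hi.2 hj.1 hj.2 hk.1 hk.2 hij hjk⟩

/-- `EVarRel J N` as a setoid; its quotient is the domain of the interpretation `I*`. -/
def evarSetoid {Pr : Type} (J : EncVar Pr → Bool) (N : ℕ) (hJ : ObeysTrans J N) : Setoid ℕ :=
  ⟨EVarRel J N, evarRel_equivalence hJ⟩

/-- The function symbols occurring in an expression all belong to `S`. -/
def FnSymbolsIn {Fn Pr : Type} (S : Set Fn) (E : EufExpr Fn Pr) : Prop :=
  ∀ g args, SubExpr (.t (.app g args)) E → g ∈ S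

theorem FnSymbolsIn.of_immSub {Fn Pr : Type} {S : Set Fn} {E E' : EufExpr Fn Pr}
    (hE : FnSymbolsIn S E) (h : ImmSub E' E) : FnSymbolsIn S E' :=
  fun g args hg => hE g args (hg.tail h)

theorem VarsOnlyEnum.fnSymbolsIn {Fn Pr : Type} {v : ℕ → Fn} {NM : ℕ} {F : EufFormula Fn Pr}
    (hF : VarsOnlyEnum v NM F) : FnSymbolsIn (v '' Set.Icc 1 NM) (.f F) := by
  intro g args hg
  obtain ⟨-, i, hi, hiNM, rfl⟩ := hF.1 g args hg
  exact ⟨i, ⟨hi, hiNM⟩, rfl⟩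

/-- The least index of the symbol `g` in the enumeration `v 1, …, v NM`, and `0` if it is not
enumerated. It is the value of `selT` on applications of `g`. -/
noncomputable def varIndex {Fn : Type} (v : ℕ → Fn) (NM : ℕ) (g : Fn) : ℕ :=
  sInf {i | 1 ≤ i ∧ i ≤ NM ∧ g = v i}

theorem varIndex_apply {Fn : Type} {v : ℕ → Fn} {NM i : ℕ} (hv : Set.InjOn v (Set.Icc 1 NM))
    (hi : i ∈ Set.Icc 1 NM) : varIndex v NM (v i) = i := by
  have hset : {j | 1 ≤ j ∧ j ≤ NM ∧ v i = v j} = {i} :=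
    Set.eq_singleton_iff_unique_mem.2
      ⟨⟨hi.1, hi.2, rfl⟩, fun _ hj => (hv hi ⟨hj.1, hj.2.1⟩ hj.2.2).symm⟩
  rw [varIndex, hset, csInf_singleton]

theorem selT_app {Fn Pr D : Type} (v : ℕ → Fn) (NM : ℕ) (I : Interp Fn Pr D) (g : Fn)
    (args : List (EufTerm Fn Pr)) : selT v NM I (.app g args) = varIndex v NM g := by
  rw [selT, varIndex]

theorem selT_mem_Icc {Fn Pr D : Type} {v : ℕ → Fn} {NM : ℕ} (hv : Set.InjOn v (Set.Icc 1 NM))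
    (I : Interp Fn Pr D) : ∀ T : EufTerm Fn Pr,
      FnSymbolsIn (v '' Set.Icc 1 NM) (.t T) → selT v NM I T ∈ Set.Icc 1 NM
  | .app g args, hT => by
    obtain ⟨i, hi, rfl⟩ := hT g args .refl
    rwa [selT_app, varIndex_apply hv hi]
  | .ite G T₁ T₂, hT => by
    rw [selT]
    split_ifs
    · exact selT_mem_Icc hv I T₁ (hT.of_immSub .ite1)
    · exact selT_mem_Icc hv I T₂ (hT.of_immSub .ite2)

section Encoding

variable {Fn Pr : Type} {v : ℕ → Fn} {N M : ℕ} {J : EncVar Pr → Bool}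

theorem evalP_enct_var (hv : Set.InjOn v (Set.Icc 1 (N + M))) {i k : ℕ}
    (hi : i ∈ Set.Icc 1 (N + M)) (hk : k ∈ Set.Icc 1 (N + M)) (args : List (EufTerm Fn Pr)) :
    (enct v N M k (.app (v i) args)).evalP J = true ↔ k = i := by
  rw [enct, ← hv.eq_iff hk hi, eq_comm (a := v k)]
  split_ifs with h <;> simp [PropForm.evalP, h]

theorem evalP_enct_ite (k : ℕ) (G : EufFormula Fn Pr) (T₁ T₂ : EufTerm Fn Pr) :
    (enct v N M k (.ite G T₁ T₂)).evalP J =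
      if (encf v N M G).evalP J then (enct v N M k T₁).evalP J else (enct v N M k T₂).evalP J := by
  rw [enct]
  cases h : (encf v N M G).evalP J <;> simp [PropForm.evalP, h]

theorem evalP_encf_eq_iff_exists (T₁ T₂ : EufTerm Fn Pr) :
    (encf v N M (.eq T₁ T₂)).evalP J = true ↔
      (∃ i ∈ Set.Icc 1 N, ∃ j ∈ Set.Icc 1 N, (enct v N M i T₁).evalP J = true ∧
        (evarF i j).evalP J = true ∧ (enct v N M j T₂).evalP J = true) ∨
      ∃ i ∈ Set.Icc (N + 1) (N + M),
        (enct v N M i T₁).evalP J = true ∧ (enct v N M i T₂).evalP J = true := by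
  have mem_gRange (i : ℕ) : i ∈ List.range' 1 N ↔ i ∈ Set.Icc 1 N := by
    rw [List.mem_range'_1, Set.mem_Icc]; omega
  have mem_pRange (i : ℕ) : i ∈ List.range' (N + 1) M ↔ i ∈ Set.Icc (N + 1) (N + M) := by
    rw [List.mem_range'_1, Set.mem_Icc]; omega
  rw [encf, PropForm.evalP, Bool.or_eq_true, PropForm.evalP_bigOr, PropForm.evalP_bigOr]
  simp only [List.mem_flatMap, List.mem_map, mem_gRange, mem_pRange, ↓existsAndEq, and_true,
    PropForm.evalP, Bool.and_eq_true, and_assoc, exists_and_left]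

theorem evalP_encf_eq_iff_evarRel {T₁ T₂ : EufTerm Fn Pr} {i j : ℕ}
    (hi : i ∈ Set.Icc 1 (N + M)) (hj : j ∈ Set.Icc 1 (N + M))
    (h₁ : ∀ k ∈ Set.Icc 1 (N + M), (enct v N M k T₁).evalP J = true ↔ k = i)
    (h₂ : ∀ k ∈ Set.Icc 1 (N + M), (enct v N M k T₂).evalP J = true ↔ k = j) :
    (encf v N M (.eq T₁ T₂)).evalP J = true ↔ EVarRel J N i j := by
  have gRange_subset : Set.Icc 1 N ⊆ Set.Icc 1 (N + M) :=
    Set.Icc_subset_Icc_right (Nat.le_add_right N M)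
  have pRange_subset : Set.Icc (N + 1) (N + M) ⊆ Set.Icc 1 (N + M) :=
    Set.Icc_subset_Icc_left (Nat.le_add_left 1 N)
  rw [evalP_encf_eq_iff_exists]
  constructor
  · rintro (⟨k, hk, l, hl, hk₁, hkl, hl₂⟩ | ⟨k, hk, hk₁, hk₂⟩)
    · obtain rfl := (h₁ k (gRange_subset hk)).1 hk₁
      obtain rfl := (h₂ l (gRange_subset hl)).1 hl₂
      exact .inr ⟨hk, hl, hkl⟩
    · have hk := pRange_subset hk
      exact .inl (((h₁ k hk).1 hk₁).symm.trans ((h₂ k hk).1 hk₂))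
  · have hi₁ := (h₁ i hi).2 rfl
    have hj₂ := (h₂ j hj).2 rfl
    rintro (rfl | ⟨hiN, hjN, hij⟩)
    · rcases le_or_gt i N with hiN | hNi
      · exact .inl ⟨i, ⟨hi.1, hiN⟩, i, ⟨hi.1, hiN⟩, hi₁, by rw [evarF_self]; rfl, hj₂⟩
      · exact .inr ⟨i, ⟨hNi, hi.2⟩, hi₁, hj₂⟩
    · exact .inl ⟨i, hiN, j, hjN, hi₁, hij, hj₂⟩

end Encoding

/-- The interpretation `I*` induced by `J`: each `v i` denotes the class of `i` and propositional
variables keep their value under `J`. Arguments are ignored, as they are by the encoding. -/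
noncomputable def inducedInterp {Fn Pr : Type} (v : ℕ → Fn) (N M : ℕ) (J : EncVar Pr → Bool)
    (hJ : ObeysTrans J N) : Interp Fn Pr (Quotient (evarSetoid J N hJ)) where
  fn g _ := Quotient.mk _ (varIndex v (N + M) g)
  pr p _ := J (.inl p)

section InducedInterp

variable {Fn Pr : Type} {v : ℕ → Fn} {N M : ℕ} {J : EncVar Pr → Bool} (hJ : ObeysTrans J N)

theorem evalT_inducedInterp : ∀ T : EufTerm Fn Pr,
    evalT (inducedInterp v N M J hJ) T =
      Quotient.mk _ (selT v (N + M) (inducedInterp v N M J hJ) T)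
  | .app g args => by rw [evalT, selT_app]; rfl
  | .ite G T₁ T₂ => by
    rw [evalT, selT, evalT_inducedInterp T₁, evalT_inducedInterp T₂, apply_ite (Quotient.mk _)]

theorem evalT_inducedInterp_eq_iff (T₁ T₂ : EufTerm Fn Pr) :
    evalT (inducedInterp v N M J hJ) T₁ = evalT (inducedInterp v N M J hJ) T₂ ↔
      EVarRel J N (selT v (N + M) (inducedInterp v N M J hJ) T₁)
        (selT v (N + M) (inducedInterp v N M J hJ) T₂) := by
  rw [evalT_inducedInterp, evalT_inducedInterp]
  exact Quotient.eq

mutual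

theorem evalP_enct_iff_eq_selT (hv : Set.InjOn v (Set.Icc 1 (N + M))) (T : EufTerm Fn Pr)
    (hT : FnSymbolsIn (v '' Set.Icc 1 (N + M)) (.t T)) :
    ∀ k ∈ Set.Icc 1 (N + M), (enct v N M k T).evalP J = true ↔
      k = selT v (N + M) (inducedInterp v N M J hJ) T := by
  intro k hk
  match T with
  | .app g args =>
    obtain ⟨i, hi, rfl⟩ := hT g args .refl
    rw [selT_app, varIndex_apply hv hi, evalP_enct_var hv hi hk]
  | .ite G T₁ T₂ =>
    rw [evalP_enct_ite, selT, evalF_inducedInterp hv G (hT.of_immSub .iteC)]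
    split_ifs
    · exact evalP_enct_iff_eq_selT hv T₁ (hT.of_immSub .ite1) k hk
    · exact evalP_enct_iff_eq_selT hv T₂ (hT.of_immSub .ite2) k hk
termination_by sizeOf T

theorem evalF_inducedInterp (hv : Set.InjOn v (Set.Icc 1 (N + M))) (F : EufFormula Fn Pr)
    (hF : FnSymbolsIn (v '' Set.Icc 1 (N + M)) (.f F)) :
    evalF (inducedInterp v N M J hJ) F = (encf v N M F).evalP J := by
  match F with
  | .tt | .ff | .papp p args => rw [evalF, encf]; rfl
  | .not G =>
    rw [evalF, encf, PropForm.evalP, evalF_inducedInterp hv G (hF.of_immSub .not)]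
  | .and G₁ G₂ =>
    rw [evalF, encf, PropForm.evalP, evalF_inducedInterp hv G₁ (hF.of_immSub .andL),
      evalF_inducedInterp hv G₂ (hF.of_immSub .andR)]
  | .or G₁ G₂ =>
    rw [evalF, encf, PropForm.evalP, evalF_inducedInterp hv G₁ (hF.of_immSub .orL),
      evalF_inducedInterp hv G₂ (hF.of_immSub .orR)]
  | .eq T₁ T₂ =>
    have hT₁ := hF.of_immSub .eqL
    have hT₂ := hF.of_immSub .eqR
    rw [Bool.eq_iff_iff, evalF_eq_iff, evalT_inducedInterp_eq_iff,
      evalP_encf_eq_iff_evarRel (selT_mem_Icc hv _ T₁ hT₁) (selT_mem_Icc hv _ T₂ hT₂)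
        (evalP_enct_iff_eq_selT hv T₁ hT₁) (evalP_enct_iff_eq_selT hv T₂ hT₂)]
termination_by sizeOf F

end

end InducedInterp

theorem eF_F_lemma_general {Fn Pr : Type} {v : ℕ → Fn} {N M : ℕ}
    (hv : Set.InjOn v (Set.Icc 1 (N + M))) {J : EncVar Pr → Bool} (hJ : ObeysTrans J N) :
    ∃ (D : Type) (_ : Nonempty D) (I : Interp Fn Pr D), ∀ F : EufFormula Fn Pr,
      FnSymbolsIn (v '' Set.Icc 1 (N + M)) (.f F) → evalF I F = (encf v N M F).evalP J :=
  ⟨_, ⟨Quotient.mk _ 0⟩, inducedInterp v N M J hJ, evalF_inducedInterp hJ hv⟩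

/-- For every truth assignment `J` obeying transitivity there is an
interpretation `I*` of the variables of `F*` with `I*[F*] = J[encf(F*)]`. -/
theorem eF_F_lemma {Fn Pr : Type} (v : ℕ → Fn) (N M : ℕ)
    (Fstar : EufFormula Fn Pr) (hvars : VarsOnlyEnum v (N + M) Fstar)
    (hinj : ∀ i j, 1 ≤ i → i ≤ N + M → 1 ≤ j → j ≤ N + M → v i = v j → i = j)
    (J : EncVar Pr → Bool) (htrans : ObeysTrans J N) :
    ∃ (D : Type) (_ : Nonempty D) (I : Interp Fn Pr D),
      evalF I Fstar = (encf v N M Fstar).evalP J := by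
  obtain ⟨D, hD, I, hI⟩ :=
    eF_F_lemma_general (fun i hi j hj => hinj i j hi.1 hi.2 hj.1 hj.2) htrans
  exact ⟨D, hD, I, hI Fstar hvars.fnSymbolsIn⟩
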